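/- arXiv:0807.1333 — 4 statements merged into one kernel-verified Lean document; each statement's English description precedes it below -/
import Mathlib

section
/- Let r ∈ [0,1]. For every Hermitian matrix F ∈ M₂(ℂ) with Tr(F²) = 1/2 and every eigenvalue λ of the matrix 2F², one has (1/2)·[ h(2·Re Tr(F²·ρ₊)) + h(2·Re Tr(F²·ρ×)) ] + h((1+r)/2) − h(r·λ + (1−r)/2) ≥ min(1/2, h((1+r)/2)), where ρ₊ = !![1,0;0,0] and ρ× = !![1/2,1/2;1/2,1/2]. -/
/-!
In Bloch coordinates `2F² = (1 + a·σ)/2`, with `t = 2λ - 1 = ±|a|`, and the two measured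
probabilities are `(1 + z)/2` and `(1 + x)/2` with `x² + z² ≤ t² ≤ 1`.

The entropy has the expansion `log 2 · (1 - h((1 + x)/2)) = f(x²)`, where
`f(s) = ∑ₖ s^(k+1) / ((2k+1)(2k+2))` on `[0, 1]` (`binEnt_eq`). As the coefficients are
nonnegative, `f` is superadditive and monotone (`entSeries_superadd`), so the claim reduces to
`f(r² s) - f(s)/2 ≥ min (f(r²) - f(1)/2) 0` for `s = t² ∈ [0, 1]` (`entSeries_min`). The left side
is the power series in `s` with coefficients `(r^(2k+2) - 1/2) / ((2k+1)(2k+2))`, which change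
sign only once, from `+` to `-`. If this happens after degree `K`, then comparing `s^(k+1)` with
`s^K` termwise bounds the series below by `s^K` times its value at `s = 1`.
-/

open Matrix

/-- The base-2 binary entropy function `h(p) = -p·log₂ p - (1-p)·log₂(1-p)`. -/
noncomputable def binEnt (p : ℝ) : ℝ := -(p * Real.logb 2 p) - (1 - p) * Real.logb 2 (1 - p)

/-- The BB84 state `ρ₊ = |0⟩⟨0|`. -/
noncomputable def rhoPlus : Matrix (Fin 2) (Fin 2) ℂ := !![1, 0; 0, 0]

/-- The BB84 state `ρ× = |+⟩⟨+|`. -/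
noncomputable def rhoTimes : Matrix (Fin 2) (Fin 2) ℂ := !![1/2, 1/2; 1/2, 1/2]

/-- The coefficient of `s ^ (k + 1)` in the expansion of `log 2 · (1 - h((1 + √s) / 2))`. -/
noncomputable def entCoeff (k : ℕ) : ℝ := 1 / ((2 * k + 1) * (2 * k + 2))

/-- The sum of `entCoeff k * s ^ (k + 1)`; only `s ∈ [0, 1]` is of interest. -/
noncomputable def entSeries (s : ℝ) : ℝ := ∑' k : ℕ, entCoeff k * s ^ (k + 1)

lemma entCoeff_nonneg (k : ℕ) : 0 ≤ entCoeff k := by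
  unfold entCoeff; positivity

lemma summable_entCoeff : Summable entCoeff := by
  have h : Summable fun k : ℕ => 1 / ((k + 1 : ℕ) : ℝ) ^ 2 :=
    (summable_nat_add_iff 1).2 (Real.summable_one_div_nat_pow.2 one_lt_two)
  refine Summable.of_nonneg_of_le entCoeff_nonneg (fun k => ?_) h
  unfold entCoeff
  have hk : (0 : ℝ) ≤ k := k.cast_nonneg
  apply one_div_le_one_div_of_le (by positivity)
  push_cast
  nlinarith

lemma summable_entSeries {s : ℝ} (h0 : 0 ≤ s) (h1 : s ≤ 1) :
    Summable fun k : ℕ => entCoeff k * s ^ (k + 1) :=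
  Summable.of_nonneg_of_le (fun k => mul_nonneg (entCoeff_nonneg k) (pow_nonneg h0 _))
    (fun k => mul_le_of_le_one_right (entCoeff_nonneg k) (pow_le_one₀ h0 h1)) summable_entCoeff

lemma binEnt_eq_binEntropy (p : ℝ) : binEnt p = Real.binEntropy p / Real.log 2 := by
  unfold binEnt Real.binEntropy Real.logb
  rw [Real.log_inv, Real.log_inv]
  ring

lemma entSeries_sq_of_lt {x : ℝ} (hx : |x| < 1) :
    entSeries (x ^ 2) = Real.log 2 - Real.binEntropy ((1 + x) / 2) := by
  obtain ⟨hl, hu⟩ := abs_lt.1 hx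
  have hA := (Real.hasSum_log_sub_log_of_abs_lt_one hx).mul_left (x / 2)
  have hx2 : |x ^ 2| < 1 := by
    rw [abs_pow]; exact pow_lt_one₀ (abs_nonneg x) hx two_ne_zero
  have hB := (Real.hasSum_pow_div_log_of_abs_lt_one hx2).mul_left (1 / 2)
  have hC := hA.sub hB
  have hterm : ∀ k : ℕ, entCoeff k * (x ^ 2) ^ (k + 1) =
      x / 2 * (2 * (1 / (2 * (k : ℝ) + 1)) * x ^ (2 * k + 1))
        - 1 / 2 * ((x ^ 2) ^ (k + 1) / ((k : ℝ) + 1)) := by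
    intro k
    have e : x * x ^ (2 * k + 1) = (x ^ 2) ^ (k + 1) := by
      rw [← pow_mul]; ring
    have h1 : (2 * (k : ℝ) + 1) ≠ 0 := by positivity
    have h2 : ((k : ℝ) + 1) ≠ 0 := by positivity
    have e2 : x / 2 * (2 * (1 / (2 * (k : ℝ) + 1)) * x ^ (2 * k + 1)) =
      1 / (2 * (k : ℝ) + 1) * (x * x ^ (2 * k + 1)) := by ring
    rw [e2, e]
    unfold entCoeff
    field_simp
    ring
  unfold entSeries
  rw [tsum_congr hterm, hC.tsum_eq]
  have hp : (0 : ℝ) < 1 + x := by linarith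
  have hm : (0 : ℝ) < 1 - x := by linarith
  have e1 : 1 - x ^ 2 = (1 + x) * (1 - x) := by ring
  have e3 : 1 - (1 + x) / 2 = (1 - x) / 2 := by ring
  unfold Real.binEntropy
  rw [e1, e3, Real.log_mul hp.ne' hm.ne', Real.log_inv, Real.log_inv,
    Real.log_div hp.ne' two_ne_zero, Real.log_div hm.ne' two_ne_zero]
  ring

/-- The expansion extends to the endpoints `x = ±1` because both sides are continuous there. -/
lemma entSeries_sq {x : ℝ} (hx : x ∈ Set.Icc (-1 : ℝ) 1) :
    entSeries (x ^ 2) = Real.log 2 - Real.binEntropy ((1 + x) / 2) := by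
  have hc1 : ContinuousOn (fun x : ℝ => entSeries (x ^ 2)) (Set.Icc (-1) 1) := by
    unfold entSeries
    refine continuousOn_tsum (fun k => by fun_prop) summable_entCoeff (fun k y hy => ?_)
    have hy2 : y ^ 2 ≤ 1 := by nlinarith [hy.1, hy.2]
    rw [Real.norm_of_nonneg (mul_nonneg (entCoeff_nonneg k) (by positivity))]
    exact mul_le_of_le_one_right (entCoeff_nonneg k) (pow_le_one₀ (sq_nonneg y) hy2)
  have hc2 : ContinuousOn (fun x : ℝ => Real.log 2 - Real.binEntropy ((1 + x) / 2))
      (Set.Icc (-1) 1) := by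
    have := Real.binEntropy_continuous
    fun_prop
  have heq : Set.EqOn (fun x : ℝ => entSeries (x ^ 2))
      (fun x : ℝ => Real.log 2 - Real.binEntropy ((1 + x) / 2)) (Set.Ioo (-1) 1) :=
    fun y hy => entSeries_sq_of_lt (abs_lt.2 hy)
  exact heq.of_subset_closure hc1 hc2 Set.Ioo_subset_Icc_self
    (by rw [closure_Ioo (by norm_num)]) hx

lemma binEnt_eq {x : ℝ} (hx : x ^ 2 ≤ 1) :
    binEnt ((1 + x) / 2) = 1 - entSeries (x ^ 2) / Real.log 2 := by
  have hL : Real.log 2 ≠ 0 := (Real.log_pos one_lt_two).ne'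
  rw [entSeries_sq (abs_le.1 ((sq_le_one_iff_abs_le_one x).1 hx)), binEnt_eq_binEntropy]
  field_simp
  ring

lemma entSeries_one : entSeries 1 = Real.log 2 := by
  have h := entSeries_sq (x := 1) (by norm_num)
  norm_num at h
  exact h

lemma entSeries_superadd {a b s : ℝ} (ha : 0 ≤ a) (hb : 0 ≤ b) (hab : a + b ≤ s) (hs : s ≤ 1) :
    entSeries a + entSeries b ≤ entSeries s := by
  have sa := summable_entSeries ha (by linarith)
  have sb := summable_entSeries hb (by linarith)
  unfold entSeries
  rw [← sa.tsum_add sb]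
  refine (sa.add sb).tsum_le_tsum (fun k => ?_) (summable_entSeries (by linarith) hs)
  rw [← mul_add]
  refine mul_le_mul_of_nonneg_left ?_ (entCoeff_nonneg k)
  exact (pow_add_pow_le ha hb k.succ_ne_zero).trans
    (pow_le_pow_left₀ (by linarith) hab _)

/-- The single sign change of the coefficients `q ^ (k + 1) - 1 / 2` forces the series
`entSeries (q * s) - entSeries s / 2` to be bounded below by its values at `s = 0` and `s = 1`. -/
lemma entSeries_min {q s : ℝ} (hq0 : 0 ≤ q) (hq1 : q ≤ 1) (hs0 : 0 ≤ s) (hs1 : s ≤ 1) :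
    min (entSeries q - entSeries 1 / 2) 0 ≤ entSeries (q * s) - entSeries s / 2 := by
  have ss := summable_entSeries hs0 hs1
  have s1 := summable_entSeries zero_le_one le_rfl
  have sq := summable_entSeries hq0 hq1
  have sqs := summable_entSeries (mul_nonneg hq0 hs0) (mul_le_one₀ hq1 hs0 hs1)
  rcases hq1.eq_or_lt with rfl | hq
  · refine (min_le_right _ _).trans ?_
    have : 0 ≤ entSeries s :=
      tsum_nonneg fun k => mul_nonneg (entCoeff_nonneg k) (pow_nonneg hs0 _)
    rw [one_mul]; linarith
  -- `K` is the number of nonnegative coefficients.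
  have hex : ∃ K : ℕ, q ^ (K + 1) ≤ 1 / 2 := by
    obtain ⟨n, hn⟩ := exists_pow_lt_of_lt_one (show (0 : ℝ) < 1 / 2 by norm_num) hq
    exact ⟨n, (pow_le_pow_of_le_one hq0 hq1 n.le_succ).trans hn.le⟩
  classical
  obtain ⟨K, hK, hmin⟩ : ∃ K : ℕ, q ^ (K + 1) ≤ 1 / 2 ∧ ∀ k < K, 1 / 2 < q ^ (k + 1) :=
    ⟨Nat.find hex, Nat.find_spec hex, fun k hk => not_le.1 (Nat.find_min hex hk)⟩
  have key : s ^ K * (entSeries q - entSeries 1 / 2) ≤ entSeries (q * s) - entSeries s / 2 := by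
    unfold entSeries
    rw [← tsum_div_const, ← tsum_div_const, ← sq.tsum_sub (s1.div_const 2),
      ← sqs.tsum_sub (ss.div_const 2), ← tsum_mul_left]
    refine ((sq.sub (s1.div_const 2)).mul_left _).tsum_le_tsum (fun k => ?_)
      (sqs.sub (ss.div_const 2))
    have hmain : 0 ≤ (q ^ (k + 1) - 1 / 2) * (s ^ (k + 1) - s ^ K) := by
      rcases lt_or_ge k K with h | h
      · exact mul_nonneg (by linarith [hmin k h])
          (sub_nonneg.2 (pow_le_pow_of_le_one hs0 hs1 h))
      · refine mul_nonneg_of_nonpos_of_nonpos ?_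
          (sub_nonpos.2 (pow_le_pow_of_le_one hs0 hs1 (by omega)))
        linarith [pow_le_pow_of_le_one hq0 hq1 (show K + 1 ≤ k + 1 by omega)]
    have := mul_nonneg (entCoeff_nonneg k) hmain
    rw [mul_pow, one_pow]
    linarith
  refine le_trans ?_ key
  have hp0 : 0 ≤ s ^ K := pow_nonneg hs0 K
  have hp1 : s ^ K ≤ 1 := pow_le_one₀ hs0 hs1
  rcases le_total 0 (entSeries q - entSeries 1 / 2) with h | h
  · exact (min_le_right _ _).trans (mul_nonneg hp0 h)
  · refine (min_le_left _ _).trans ?_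
    nlinarith

/-- The claim in Bloch coordinates. -/
lemma bloch_bound {r x z t : ℝ} (hr0 : 0 ≤ r) (hr1 : r ≤ 1) (hxz : z ^ 2 + x ^ 2 ≤ t ^ 2)
    (ht : t ^ 2 ≤ 1) :
    min (1 / 2) (binEnt ((1 + r) / 2)) ≤
      (1 / 2) * (binEnt ((1 + z) / 2) + binEnt ((1 + x) / 2))
        + binEnt ((1 + r) / 2) - binEnt ((1 + r * t) / 2) := by
  have hr2 : r ^ 2 ≤ 1 := pow_le_one₀ hr0 hr1
  have hrt : (r * t) ^ 2 ≤ 1 := by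
    rw [mul_pow]; exact mul_le_one₀ hr2 (sq_nonneg t) ht
  rw [binEnt_eq (x := z) (by nlinarith [sq_nonneg x]),
    binEnt_eq (x := x) (by nlinarith [sq_nonneg z]), binEnt_eq hr2, binEnt_eq hrt, mul_pow]
  have h1 := entSeries_superadd (sq_nonneg z) (sq_nonneg x) hxz ht
  have h2 := entSeries_min (sq_nonneg r) hr2 (sq_nonneg t) ht
  rw [entSeries_one] at h2
  have hL : 0 < Real.log 2 := Real.log_pos one_lt_two
  have h3 : min (entSeries (r ^ 2) - Real.log 2 / 2) 0 ≤
      entSeries (r ^ 2 * t ^ 2) - (entSeries (z ^ 2) + entSeries (x ^ 2)) / 2 := by linarith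
  have hLL : Real.log 2 / Real.log 2 = 1 := div_self hL.ne'
  rcases min_le_iff.1 h3 with h | h
  · refine (min_le_left _ _).trans ?_
    have := div_le_div_of_nonneg_right h hL.le
    simp only [sub_div, add_div, div_right_comm _ (2 : ℝ), hLL] at this
    linarith
  · refine (min_le_right _ _).trans ?_
    have := div_nonneg h hL.le
    simp only [sub_div, add_div, div_right_comm _ (2 : ℝ)] at this
    linarith

/-- For `r ∈ [0,1]`, every Hermitian `F ∈ M₂(ℂ)` with `Tr(F²) = 1/2` and every
eigenvalue `λ` of `2F²`, one has
`(1/2)·[h(2·Re Tr(F²ρ₊)) + h(2·Re Tr(F²ρ×))] + h((1+r)/2) - h(rλ + (1-r)/2)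
  ≥ min(1/2, h((1+r)/2))`. -/
theorem stmt_0 (r : ℝ) (hr : r ∈ Set.Icc (0 : ℝ) 1)
    (F : Matrix (Fin 2) (Fin 2) ℂ) (hF : F.IsHermitian)
    (htr : (F * F).trace = 1 / 2)
    (lam : ℝ)
    (hlam : ∃ v : Fin 2 → ℂ, v ≠ 0 ∧ ((2 : ℂ) • (F * F)) *ᵥ v = (lam : ℂ) • v) :
    (1 / 2) * (binEnt (2 * ((F * F * rhoPlus).trace).re)
        + binEnt (2 * ((F * F * rhoTimes).trace).re))
      + binEnt ((1 + r) / 2) - binEnt (r * lam + (1 - r) / 2)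
      ≥ min (1 / 2) (binEnt ((1 + r) / 2)) := by
  -- `F = !![a, p + qi; p - qi, d]` with real `a`, `d`, `p`, `q`.
  have h00 : (F 0 0).im = 0 := by
    have := congrArg Complex.im (hF.apply 0 0)
    simp at this; linarith
  have h11 : (F 1 1).im = 0 := by
    have := congrArg Complex.im (hF.apply 1 1)
    simp at this; linarith
  have h10r : (F 1 0).re = (F 0 1).re := by
    have := congrArg Complex.re (hF.apply 0 1)
    simpa using this
  have h10i : (F 1 0).im = -(F 0 1).im := by
    have := congrArg Complex.im (hF.apply 0 1)
    simp at this; linarith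
  obtain ⟨v, hv, hev⟩ := hlam
  have hdet : ((2 : ℂ) • (F * F) - (lam : ℂ) • (1 : Matrix (Fin 2) (Fin 2) ℂ)).det = 0 := by
    refine Matrix.exists_mulVec_eq_zero_iff.1 ⟨v, hv, ?_⟩
    rw [Matrix.sub_mulVec, hev, Matrix.smul_mulVec, Matrix.one_mulVec, sub_self]
  have htr' := congrArg Complex.re htr
  have hdet' := congrArg Complex.re hdet
  simp [Matrix.trace_fin_two, Matrix.mul_apply, Fin.sum_univ_two, h00, h11, h10r, h10i] at htr'
  simp [Matrix.det_fin_two, Matrix.mul_apply, Fin.sum_univ_two, h00, h11, h10r, h10i] at hdet'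
  have hP : 2 * ((F * F * rhoPlus).trace).re =
      2 * ((F 0 0).re ^ 2 + (F 0 1).re ^ 2 + (F 0 1).im ^ 2) := by
    simp [rhoPlus, Matrix.trace_fin_two, Matrix.mul_apply, Fin.sum_univ_two, h00, h10r, h10i]
    ring
  have hX : 2 * ((F * F * rhoTimes).trace).re =
      (F 0 0).re ^ 2 + (F 1 1).re ^ 2 + 2 * ((F 0 1).re ^ 2 + (F 0 1).im ^ 2)
        + 2 * (F 0 1).re * ((F 0 0).re + (F 1 1).re) := by
    simp [rhoTimes, Matrix.trace_fin_two, Matrix.mul_apply, Fin.sum_univ_two, h00, h11, h10r,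
      h10i]
    ring
  rw [hP, hX]
  generalize (F 0 0).re = a at *
  generalize (F 1 1).re = d at *
  generalize (F 0 1).re = p at *
  generalize (F 0 1).im = q at *
  have hd : d ^ 2 = 1 / 2 - a ^ 2 - 2 * p ^ 2 - 2 * q ^ 2 := by linarith
  -- The characteristic equation `λ² - λ + 4 (det F)² = 0`, in terms of `t = 2 λ - 1`.
  have ht : (2 * lam - 1) ^ 2 = 1 - 16 * (a * d - p ^ 2 - q ^ 2) ^ 2 := by
    linear_combination 4 * hdet' + 8 * lam * hd
  have hmain := bloch_bound (r := r) (x := 4 * p * (a + d))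
    (z := 4 * (a ^ 2 + p ^ 2 + q ^ 2) - 1) (t := 2 * lam - 1) hr.1 hr.2
    (by
      have e : (4 * (a ^ 2 + p ^ 2 + q ^ 2) - 1) ^ 2 + (4 * p * (a + d)) ^ 2
          + (4 * q * (a + d)) ^ 2 = (2 * lam - 1) ^ 2 := by
        rw [ht]
        linear_combination 16 * (a ^ 2 + p ^ 2 + q ^ 2) * hd
      linarith [sq_nonneg (4 * q * (a + d))])
    (by rw [ht]; nlinarith [sq_nonneg (a * d - p ^ 2 - q ^ 2)])
  refine hmain.trans (le_of_eq ?_)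
  congr 3
  · congr 2
    · ring
    · linear_combination (-1) * hd
  · ring
end

section
/- For all r ∈ [0,1] and all α ∈ [0, 1/√2], t(r,α) ≥ min(1/2, h((1+r)/2)). -/
/-- `g(r,α) = h((1+r)/2 - 2α²r)`. -/
noncomputable def gFun (r α : ℝ) : ℝ := binEnt ((1 + r) / 2 - 2 * α ^ 2 * r)

/-- `t(r,α) = (1 + g(1,α))/2 + h((1+r)/2) - g(r,α)`. -/
noncomputable def tFun (r α : ℝ) : ℝ :=
  (1 + gFun 1 α) / 2 + binEnt ((1 + r) / 2) - gFun r α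

/-- The entropy defect `F(x) = log 2 - H((1 + x)/2)` in nats, written out. The junk value `log 0 = 0`
makes it correct at `x = ±1`. -/
noncomputable def entDefect (x : ℝ) : ℝ :=
  ((1 + x) * Real.log (1 + x) + (1 - x) * Real.log (1 - x)) / 2

lemma binEnt_eq_entDefect (x : ℝ) : binEnt ((1 + x) / 2) = 1 - entDefect x / Real.log 2 := by
  have hL : Real.log 2 ≠ 0 := ne_of_gt (Real.log_pos one_lt_two)
  -- this form of `log (y / 2)` also holds at `y = 0`
  have key : ∀ y : ℝ, y * Real.log (y / 2) = y * Real.log y - y * Real.log 2 := by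
    intro y
    rcases eq_or_ne y 0 with rfl | hy
    · simp
    · rw [Real.log_div hy two_ne_zero]; ring
  have h1 := key (1 + x)
  have h2 := key (1 - x)
  unfold binEnt entDefect Real.logb
  rw [show 1 - (1 + x) / 2 = (1 - x) / 2 by ring]
  field_simp
  linarith

lemma entDefect_one : entDefect 1 = Real.log 2 := by
  norm_num [entDefect]

lemma entDefect_abs (x : ℝ) : entDefect |x| = entDefect x := by
  rcases abs_choice x with h | h <;> rw [h]
  unfold entDefect
  rw [show 1 + -x = 1 - x by ring, show 1 - -x = 1 + x by ring]
  ring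

lemma continuous_entDefect : Continuous entDefect := by
  unfold entDefect
  have h1 : Continuous fun x : ℝ => (1 + x) * Real.log (1 + x) :=
    Real.continuous_mul_log.comp (by fun_prop : Continuous fun x : ℝ => 1 + x)
  have h2 : Continuous fun x : ℝ => (1 - x) * Real.log (1 - x) :=
    Real.continuous_mul_log.comp (by fun_prop : Continuous fun x : ℝ => 1 - x)
  exact (h1.add h2).div_const 2

lemma hasSum_entDefect {x : ℝ} (hx : |x| < 1) :
    HasSum (fun k : ℕ => (1 / (2 * (k : ℝ) + 1) - 1 / (2 * k + 2)) * x ^ (2 * k + 2))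
      (entDefect x) := by
  have hx2 : |x ^ 2| < 1 := by
    rw [abs_pow]; exact pow_lt_one₀ (abs_nonneg x) hx two_ne_zero
  obtain ⟨h1, h2⟩ := abs_lt.mp hx
  -- `2 F(x) = x (log (1 + x) - log (1 - x)) + log (1 - x²)`
  have hs := (((Real.hasSum_log_sub_log_of_abs_lt_one hx).mul_left x).sub
    (Real.hasSum_pow_div_log_of_abs_lt_one hx2)).div_const 2
  have hlog : Real.log (1 - x ^ 2) = Real.log (1 + x) + Real.log (1 - x) := by
    rw [← Real.log_mul (by linarith) (by linarith)]; ring_nf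
  convert hs using 1
  · rfl
  · funext k
    have : (2 * (k : ℝ) + 1) ≠ 0 := by positivity
    have : ((k : ℝ) + 1) ≠ 0 := by positivity
    rw [← pow_mul, show 2 * (k + 1) = 2 * k + 2 by ring]
    field_simp
    ring
  · rw [hlog]; unfold entDefect; ring

lemma entDefect_coeff_nonneg (k : ℕ) : 0 ≤ 1 / (2 * (k : ℝ) + 1) - 1 / (2 * k + 2) := by
  rw [sub_nonneg]
  exact one_div_le_one_div_of_le (by positivity) (by linarith)

lemma entDefect_nonneg {x : ℝ} (h0 : 0 ≤ x) (h1 : x ≤ 1) : 0 ≤ entDefect x := by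
  rcases h1.lt_or_eq with h | rfl
  · exact (hasSum_entDefect (by rwa [abs_of_nonneg h0])).nonneg
      fun k => mul_nonneg (entDefect_coeff_nonneg k) (by positivity)
  · rw [entDefect_one]; exact (Real.log_pos one_lt_two).le

/-- The single sign change of the coefficients of `s ↦ F(s)/2 - F(r s)` bounds it at `s = q u`
by its value at `u`. -/
lemma entDefect_diff_le_of_lt {r q u : ℝ} (hr0 : 0 ≤ r) (hr1 : r < 1) (hq0 : 0 ≤ q) (hq1 : q ≤ 1)
    (hu0 : 0 ≤ u) (hu1 : u < 1) :
    entDefect (q * u) / 2 - entDefect (r * (q * u)) ≤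
      max 0 (entDefect u / 2 - entDefect (r * u)) := by
  have hex : ∃ m : ℕ, r ^ (2 * m + 2) ≤ 1 / 2 := by
    obtain ⟨n, hn⟩ := exists_pow_lt_of_lt_one (by norm_num : (0 : ℝ) < 1 / 2) hr1
    exact ⟨n, (pow_le_pow_of_le_one hr0 hr1.le (by omega)).trans hn.le⟩
  classical
  obtain ⟨m, hm, hmin⟩ : ∃ m : ℕ, r ^ (2 * m + 2) ≤ 1 / 2 ∧
      ∀ k < m, 1 / 2 < r ^ (2 * k + 2) :=
    ⟨Nat.find hex, Nat.find_spec hex, fun k hk => not_le.mp (Nat.find_min hex hk)⟩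
  have series : ∀ v : ℝ, 0 ≤ v → v < 1 → HasSum
      (fun k : ℕ => (1 / (2 * (k : ℝ) + 1) - 1 / (2 * k + 2)) * (1 / 2 - r ^ (2 * k + 2))
        * v ^ (2 * k + 2)) (entDefect v / 2 - entDefect (r * v)) := by
    intro v hv0 hv1
    have hrv : r * v < 1 := by nlinarith
    convert ((hasSum_entDefect (x := v) (by rwa [abs_of_nonneg hv0])).div_const 2).sub
      (hasSum_entDefect (x := r * v) (by rwa [abs_of_nonneg (by positivity)])) using 1
    · rfl
    · funext k
      rw [mul_pow]
      ring
  have hle : entDefect (q * u) / 2 - entDefect (r * (q * u)) ≤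
      q ^ (2 * m) * (entDefect u / 2 - entDefect (r * u)) := by
    refine hasSum_le (fun k => ?_) (series (q * u) (by positivity) (by nlinarith))
      ((series u hu0 hu1).mul_left (q ^ (2 * m)))
    have hc : 0 ≤ (1 / (2 * (k : ℝ) + 1) - 1 / (2 * k + 2)) * u ^ (2 * k + 2) :=
      mul_nonneg (entDefect_coeff_nonneg k) (by positivity)
    have hterm : (1 / 2 - r ^ (2 * k + 2)) * q ^ (2 * k + 2) ≤
        (1 / 2 - r ^ (2 * k + 2)) * q ^ (2 * m) := by
      rcases lt_or_ge k m with hk | hk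
      · exact mul_le_mul_of_nonpos_left (pow_le_pow_of_le_one hq0 hq1 (by omega))
          (by linarith [hmin k hk])
      · refine mul_le_mul_of_nonneg_left (pow_le_pow_of_le_one hq0 hq1 (by omega)) ?_
        have : r ^ (2 * k + 2) ≤ r ^ (2 * m + 2) := pow_le_pow_of_le_one hr0 hr1.le (by omega)
        linarith
    rw [mul_pow]
    nlinarith [mul_le_mul_of_nonneg_left hterm hc]
  refine hle.trans ?_
  have hp0 : 0 ≤ q ^ (2 * m) := by positivity
  have hp1 : q ^ (2 * m) ≤ 1 := pow_le_one₀ hq0 hq1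
  calc q ^ (2 * m) * (entDefect u / 2 - entDefect (r * u))
      ≤ q ^ (2 * m) * max 0 (entDefect u / 2 - entDefect (r * u)) :=
        mul_le_mul_of_nonneg_left (le_max_right _ _) hp0
    _ ≤ _ := mul_le_of_le_one_left (le_max_left _ _) hp1

lemma entDefect_diff_le {r s : ℝ} (hr0 : 0 ≤ r) (hr1 : r ≤ 1) (hs0 : 0 ≤ s) (hs1 : s ≤ 1) :
    entDefect s / 2 - entDefect (r * s) ≤ max 0 (entDefect 1 / 2 - entDefect r) := by
  rcases hr1.lt_or_eq with hr | rfl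
  · -- let `u → 1` from below in the bound at `s * u`
    have hc := continuous_entDefect
    have hlim1 : Filter.Tendsto (fun u => entDefect (s * u) / 2 - entDefect (r * (s * u)))
        (nhdsWithin 1 (Set.Iio 1)) (nhds (entDefect s / 2 - entDefect (r * s))) := by
      have : Continuous fun u => entDefect (s * u) / 2 - entDefect (r * (s * u)) := by fun_prop
      simpa using (this.tendsto 1).mono_left nhdsWithin_le_nhds
    have hlim2 : Filter.Tendsto (fun u => max 0 (entDefect u / 2 - entDefect (r * u)))
        (nhdsWithin 1 (Set.Iio 1)) (nhds (max 0 (entDefect 1 / 2 - entDefect r))) := by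
      have : Continuous fun u => max 0 (entDefect u / 2 - entDefect (r * u)) := by fun_prop
      simpa using (this.tendsto 1).mono_left nhdsWithin_le_nhds
    refine le_of_tendsto_of_tendsto hlim1 hlim2 ?_
    filter_upwards [Ioo_mem_nhdsLT (zero_lt_one : (0 : ℝ) < 1)] with u hu
    exact entDefect_diff_le_of_lt hr0 hr hs0 hs1 hu.1.le hu.2
  · refine le_max_of_le_left ?_
    rw [one_mul]
    linarith [entDefect_nonneg hs0 hs1]

/-- For all `r ∈ [0,1]` and all `α ∈ [0, 1/√2]`,
`t(r,α) ≥ min(1/2, h((1+r)/2))`. -/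
theorem stmt_1 (r : ℝ) (hr : r ∈ Set.Icc (0 : ℝ) 1)
    (α : ℝ) (hα : α ∈ Set.Icc (0 : ℝ) (1 / Real.sqrt 2)) :
    tFun r α ≥ min (1 / 2) (binEnt ((1 + r) / 2)) := by
  obtain ⟨hr0, hr1⟩ := hr
  obtain ⟨hα0, hα1⟩ := hα
  have hL : 0 < Real.log 2 := Real.log_pos one_lt_two
  have hα2 : α ^ 2 ≤ 1 / 2 := by
    have := pow_le_pow_left₀ hα0 hα1 2
    rwa [div_pow, one_pow, Real.sq_sqrt zero_le_two] at this
  obtain ⟨s, hs⟩ : ∃ s, s = 1 - 4 * α ^ 2 := ⟨_, rfl⟩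
  have hs1 : |s| ≤ 1 := abs_le.mpr ⟨by linarith, by linarith [sq_nonneg α]⟩
  have hD := entDefect_diff_le hr0 hr1 (abs_nonneg s) hs1
  rw [show r * |s| = |r * s| by rw [abs_mul, abs_of_nonneg hr0], entDefect_abs, entDefect_abs,
    entDefect_one] at hD
  have hg1 : gFun 1 α = 1 - entDefect s / Real.log 2 := by
    rw [← binEnt_eq_entDefect, gFun, hs]; ring_nf
  have hgr : gFun r α = 1 - entDefect (r * s) / Real.log 2 := by
    rw [← binEnt_eq_entDefect, gFun, hs]; ring_nf
  rw [tFun, hg1, hgr, binEnt_eq_entDefect, ge_iff_le, min_le_iff]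
  rcases le_max_iff.mp hD with h | h
  · right
    have := div_nonpos_of_nonpos_of_nonneg h hL.le
    rw [sub_div, div_right_comm] at this
    linarith
  · left
    have := div_le_div_of_nonneg_right h hL.le
    rw [sub_div, sub_div, div_right_comm, div_right_comm (Real.log 2), div_self hL.ne'] at this
    linarith
end

section
/- Let a, b, a′, b′ be finite nonempty types, let ρ be a positive semidefinite matrix indexed by a × b and ρ′ a positive semidefinite matrix indexed by a′ × b′. Define m(ρ) := inf { Re Tr(σ) : σ a positive semidefinite matrix indexed by b such that 1_a ⊗ σ − ρ is positive semidefinite }, and define m(ρ′) analogously. Let ρ ⊗ ρ′ denote the Kronecker product, reindexed along the bijection (a × b) × (a′ × b′) ≃ (a × a′) × (b × b′). Then for every positive semidefinite matrix τ indexed by b × b′ such that 1_{a×a′} ⊗ τ − (ρ ⊗ ρ′) is positive semidefinite, one has Re Tr(τ) ≥ m(ρ) · m(ρ′). Equivalently, m(ρ ⊗ ρ′) ≥ m(ρ) · m(ρ′). -/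
open Matrix Kronecker ComplexOrder

/-!
Weak duality for the product and strong duality for each factor give the inequality.

Strong duality (`exists_dual`): `m(ρ) = sInf (feas ρ)` is a nonnegative sublinear function of the
Hermitian matrix `ρ`, so Hahn–Banach extends `c • ρ ↦ c * m(ρ)` to a real functional `g ≤ m` on
Hermitian matrices. Writing `g = Tr (E ·)` with `E` Hermitian, the bound `m(-Q) ≤ 0` for `Q ≥ 0`
makes `E` positive semidefinite, and `m(1 ⊗ σ) ≤ Tr σ` says that the partial trace of `E` over the
first factor is at most `1`. Thus `E` is an optimal dual solution.

Tensoring: for optimal dual solutions `E`, `E'`, the matrix `E ⊗ E'` is positive semidefinite and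
its partial trace `X ⊗ X'` satisfies `X ⊗ X' ≤ 1`. Hence, for feasible `τ`,
`Tr τ ≥ Tr ((X ⊗ X') τ) = Tr ((E ⊗ E') (1 ⊗ τ)) ≥ Tr (E ρ) Tr (E' ρ') = m(ρ) m(ρ')`.
-/

open ComplexStarModule in
/-- Every real functional on Hermitian matrices is `H ↦ Tr (E H)` for a Hermitian `E`. -/
lemma exists_hermitian_repr {n : Type} [Fintype n] [DecidableEq n]
    (g : selfAdjoint (Matrix n n ℂ) →ₗ[ℝ] ℝ) :
    ∃ E : Matrix n n ℂ, E.IsHermitian ∧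
      ∀ H : selfAdjoint (Matrix n n ℂ), (E * (H : Matrix n n ℂ)).trace = (g H : ℂ) := by
  -- The complex-linear extension of `g`; `E` is read off from its values on matrix units.
  let h : Matrix n n ℂ →ₗ[ℂ] ℂ :=
    { toFun := fun M => (g (ℜ M) : ℂ) + Complex.I * (g (ℑ M) : ℂ)
      map_add' := by intro x y; simp only [map_add]; push_cast; ring
      map_smul' := by
        intro z x
        simp only [realPart_smul, imaginaryPart_smul, map_sub, map_add, map_smul, smul_eq_mul,
          RingHom.id_apply]
        apply Complex.ext <;> simp }
  have hstar : ∀ M, h (star M) = star (h M) := by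
    intro M
    have h1 : ℜ (star M) = ℜ M := by
      ext1; simp [realPart_apply_coe, add_comm]
    have h2 : ℑ (star M) = - ℑ M := by
      ext1; simp only [imaginaryPart_apply_coe, NegMemClass.coe_neg, star_star]
      rw [← neg_sub M, smul_neg, smul_neg]
    change (g (ℜ (star M)) : ℂ) + Complex.I * (g (ℑ (star M)) : ℂ) =
      star ((g (ℜ M) : ℂ) + Complex.I * (g (ℑ M) : ℂ))
    rw [h1, h2]
    apply Complex.ext <;> simp
  refine ⟨Matrix.of fun i j => h (Matrix.single j i 1), ?_, ?_⟩
  · ext i j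
    simp only [conjTranspose_apply, of_apply, ← hstar]
    congr 1
    rw [star_eq_conjTranspose, conjTranspose_single, star_one]
  · intro H
    have h0 : (g H : ℂ) = h H := by
      change _ = (g (ℜ (H : Matrix n n ℂ)) : ℂ) + Complex.I * (g (ℑ (H : Matrix n n ℂ)) : ℂ)
      have : ℑ (H : Matrix n n ℂ) = 0 := by
        exact H.2.imaginaryPart
      rw [this, selfAdjoint.realPart_coe]; simp
    rw [h0]
    conv_rhs => rw [Matrix.matrix_eq_sum_single (H : Matrix n n ℂ)]
    simp only [map_sum, trace, diag_apply, mul_apply, of_apply]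
    rw [Finset.sum_comm]
    refine Finset.sum_congr rfl fun i _ => Finset.sum_congr rfl fun j _ => ?_
    rw [mul_comm, ← smul_eq_mul, ← map_smul, smul_single, smul_eq_mul, mul_one]

open MatrixOrder in
lemma trace_mul_nonneg {n : Type} [Fintype n] {A B : Matrix n n ℂ}
    (hA : A.PosSemidef) (hB : B.PosSemidef) : 0 ≤ (A * B).trace := by
  classical
  obtain ⟨C, rfl⟩ := CStarAlgebra.nonneg_iff_eq_star_mul_self.mp hA.nonneg
  rw [star_eq_conjTranspose, Matrix.mul_assoc, Matrix.trace_mul_comm]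
  exact (hB.mul_mul_conjTranspose_same C).trace_nonneg

lemma posSemidef_of_trace {n : Type} [Fintype n] {M : Matrix n n ℂ} (hM : M.IsHermitian)
    (h : ∀ σ : Matrix n n ℂ, σ.PosSemidef → 0 ≤ (M * σ).trace.re) : M.PosSemidef := by
  refine .of_dotProduct_mulVec_nonneg hM fun v => ?_
  have h1 := h _ (posSemidef_vecMulVec_self_star v)
  rw [mul_vecMulVec, trace_vecMulVec, dotProduct_comm] at h1
  rw [Complex.nonneg_iff]
  exact ⟨h1, (hM.im_star_dotProduct_mulVec_self v).symm⟩

open MatrixOrder Matrix.Norms.L2Operator in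
lemma exists_smul_one_ge {n : Type} [Fintype n] [DecidableEq n] {M : Matrix n n ℂ}
    (hM : M.IsHermitian) :
    ∃ c : ℝ, 0 ≤ c ∧ (c • (1 : Matrix n n ℂ) - M).PosSemidef := by
  refine ⟨‖M‖, norm_nonneg _, ?_⟩
  rw [← Algebra.algebraMap_eq_smul_one]
  exact IsSelfAdjoint.le_algebraMap_norm_self (a := M) hM

/-- The set of objective values `Re Tr σ` of the feasible points `σ ≥ 0`, `ρ ≤ 1 ⊗ σ` of the
min-entropy program, so that `m(ρ) = sInf (feas ρ)`. -/
def feas {a b : Type} [Fintype b] [DecidableEq a]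
    (ρ : Matrix (a × b) (a × b) ℂ) : Set ℝ :=
  {s : ℝ | ∃ σ : Matrix b b ℂ, σ.PosSemidef
            ∧ ((1 : Matrix a a ℂ) ⊗ₖ σ - ρ).PosSemidef ∧ s = (σ.trace).re}

set_option linter.unusedSectionVars false

section
variable {a b : Type} [Fintype a] [Fintype b] [DecidableEq a] [DecidableEq b]
  {ρ ρ₁ ρ₂ : Matrix (a × b) (a × b) ℂ}

lemma feas_nonneg {s : ℝ} (hs : s ∈ feas ρ) : 0 ≤ s := by
  obtain ⟨σ, hσ, -, rfl⟩ := hs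
  exact (Complex.nonneg_iff.mp hσ.trace_nonneg).1

lemma feas_bddBelow : BddBelow (feas ρ) := ⟨0, fun _ hs => feas_nonneg hs⟩

lemma feas_nonempty (hρ : ρ.IsHermitian) : (feas ρ).Nonempty := by
  obtain ⟨c, hc, h⟩ := exists_smul_one_ge hρ
  refine ⟨_, c • 1, PosSemidef.one.smul hc, ?_, rfl⟩
  rwa [kronecker_smul, one_kronecker_one]

lemma feas_smul {c s : ℝ} (hc : 0 ≤ c) (hs : s ∈ feas ρ) : c * s ∈ feas (c • ρ) := by
  obtain ⟨σ, hσ, h, rfl⟩ := hs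
  refine ⟨c • σ, hσ.smul hc, ?_, by simp [trace_smul]⟩
  rw [kronecker_smul, ← smul_sub]
  exact h.smul hc

lemma feas_add {s t : ℝ} (hs : s ∈ feas ρ₁) (ht : t ∈ feas ρ₂) : s + t ∈ feas (ρ₁ + ρ₂) := by
  obtain ⟨σ, hσ, h, rfl⟩ := hs
  obtain ⟨σ', hσ', h', rfl⟩ := ht
  refine ⟨σ + σ', hσ.add hσ', ?_, by simp [trace_add]⟩
  rw [kronecker_add, add_sub_add_comm]
  exact h.add h'

lemma sInf_feas_nonneg : 0 ≤ sInf (feas ρ) := Real.sInf_nonneg fun _ hs => feas_nonneg hs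

lemma sInf_feas_smul_le (hρ : ρ.IsHermitian) {c : ℝ} (hc : 0 < c) :
    sInf (feas (c • ρ)) ≤ c * sInf (feas ρ) := by
  rw [← div_le_iff₀' hc]
  refine le_csInf (feas_nonempty hρ) fun s hs => ?_
  rw [div_le_iff₀' hc]
  exact csInf_le feas_bddBelow (feas_smul hc.le hs)

lemma sInf_feas_smul (hρ : ρ.IsHermitian) {c : ℝ} (hc : 0 < c) :
    sInf (feas (c • ρ)) = c * sInf (feas ρ) := by
  refine le_antisymm (sInf_feas_smul_le hρ hc) ?_
  have := sInf_feas_smul_le (ρ := c • ρ) (hρ.smul (IsSelfAdjoint.all c)) (inv_pos.mpr hc)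
  rw [inv_smul_smul₀ hc.ne'] at this
  rwa [← le_inv_mul_iff₀ hc]

lemma sInf_feas_add_le (h₁ : ρ₁.IsHermitian) (h₂ : ρ₂.IsHermitian) :
    sInf (feas (ρ₁ + ρ₂)) ≤ sInf (feas ρ₁) + sInf (feas ρ₂) := by
  rw [← sub_le_iff_le_add]
  refine le_csInf (feas_nonempty h₁) fun s hs => ?_
  rw [sub_le_comm]
  refine le_csInf (feas_nonempty h₂) fun t ht => ?_
  rw [sub_le_iff_le_add']
  exact csInf_le feas_bddBelow (feas_add hs ht)

/-- Strong duality: the dual program, maximizing `Tr (E ρ)` over `E ≥ 0` with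
`Tr (E (1 ⊗ σ)) ≤ Tr σ` for all `σ ≥ 0`, attains the value `m(ρ)`. -/
lemma exists_dual (hρ : ρ.IsHermitian) :
    ∃ E : Matrix (a × b) (a × b) ℂ, E.PosSemidef ∧
      (∀ σ : Matrix b b ℂ, σ.PosSemidef →
        (E * ((1 : Matrix a a ℂ) ⊗ₖ σ)).trace.re ≤ σ.trace.re) ∧
      (E * ρ).trace = (sInf (feas ρ) : ℝ) := by
  let r : selfAdjoint (Matrix (a × b) (a × b) ℂ) := ⟨ρ, hρ⟩
  let N : selfAdjoint (Matrix (a × b) (a × b) ℂ) → ℝ :=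
    fun H => sInf (feas (H : Matrix (a × b) (a × b) ℂ))
  have hzero : sInf (feas (0 : Matrix (a × b) (a × b) ℂ)) = 0 :=
    le_antisymm (csInf_le feas_bddBelow ⟨0, .zero, by simpa using PosSemidef.zero, by simp⟩)
      sInf_feas_nonneg
  have hH : ∀ c : ℝ, c • r = 0 → (RingHom.id ℝ) c • N r = 0 := by
    intro c hc
    rcases smul_eq_zero.mp hc with rfl | h0
    · simp
    · simp [N, h0, hzero]
  obtain ⟨g, hg, hgN⟩ := exists_extension_of_le_sublinear
    (LinearPMap.mkSpanSingleton' r (N r) hH) N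
    (fun c hc x => sInf_feas_smul x.2 hc) (fun x y => sInf_feas_add_le x.2 y.2) (by
      rintro ⟨x, hx⟩
      obtain ⟨c, rfl⟩ := Submodule.mem_span_singleton.mp hx
      rw [LinearPMap.mkSpanSingleton'_apply]
      simp only [RingHom.id_apply, smul_eq_mul]
      rcases le_or_gt c 0 with hc | hc
      · exact (mul_nonpos_of_nonpos_of_nonneg hc sInf_feas_nonneg).trans sInf_feas_nonneg
      · exact (sInf_feas_smul hρ hc).ge)
  have hgr : g r = N r := by
    exact (hg ⟨r, Submodule.mem_span_singleton_self r⟩).trans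
      (LinearPMap.mkSpanSingleton'_apply_self r (N r) hH _)
  obtain ⟨E, hE, hEg⟩ := exists_hermitian_repr g
  refine ⟨E, posSemidef_of_trace hE fun Q hQ => ?_, fun σ hσ => ?_, (hEg r).trans (by rw [hgr])⟩
  · have h1 := hgN (-⟨Q, hQ.1⟩)
    have h2 : N (-⟨Q, hQ.1⟩) ≤ 0 :=
      csInf_le feas_bddBelow ⟨0, .zero, by simpa using hQ, by simp⟩
    have h3 := hEg ⟨Q, hQ.1⟩
    rw [map_neg] at h1
    simp only at h3
    rw [h3, Complex.ofReal_re]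
    linarith
  · have hK : ((1 : Matrix a a ℂ) ⊗ₖ σ).PosSemidef := PosSemidef.one.kronecker hσ
    have h3 := hEg ⟨_, hK.1⟩
    simp only at h3
    rw [h3, Complex.ofReal_re]
    exact (hgN _).trans (csInf_le feas_bddBelow ⟨σ, hσ, by simpa using PosSemidef.zero, rfl⟩)

/-- The partial trace of `E` over the first tensor factor. -/
def partialTrace (E : Matrix (a × b) (a × b) ℂ) : Matrix b b ℂ :=
  Matrix.of fun j l => ∑ i, E (i, j) (i, l)

/-- The partial trace is adjoint to `σ ↦ 1 ⊗ σ`. -/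
lemma trace_mul_one_kronecker (E : Matrix (a × b) (a × b) ℂ) (σ : Matrix b b ℂ) :
    (E * ((1 : Matrix a a ℂ) ⊗ₖ σ)).trace = (partialTrace E * σ).trace := by
  simp only [trace, diag_apply, mul_apply, partialTrace, of_apply, Fintype.sum_prod_type,
    kronecker_apply, one_apply, ite_mul, one_mul, zero_mul, mul_ite, mul_zero, Finset.sum_mul]
  rw [Finset.sum_comm]
  refine Finset.sum_congr rfl fun j _ => ?_
  conv_rhs => rw [Finset.sum_comm]
  refine Finset.sum_congr rfl fun i _ => ?_
  rw [Finset.sum_comm]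
  simp

lemma partialTrace_posSemidef {E : Matrix (a × b) (a × b) ℂ} (hE : E.PosSemidef) :
    (partialTrace E).PosSemidef := by
  refine posSemidef_of_trace ?_ fun σ hσ => ?_
  · ext j l
    simp only [partialTrace, conjTranspose_apply, of_apply, star_sum]
    exact Finset.sum_congr rfl fun i _ => hE.1.apply _ _
  · rw [← trace_mul_one_kronecker]
    exact (Complex.nonneg_iff.mp (trace_mul_nonneg hE (PosSemidef.one.kronecker hσ))).1

lemma one_sub_partialTrace {E : Matrix (a × b) (a × b) ℂ} (hE : E.PosSemidef)
    (h : ∀ σ : Matrix b b ℂ, σ.PosSemidef →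
        (E * ((1 : Matrix a a ℂ) ⊗ₖ σ)).trace.re ≤ σ.trace.re) :
    (1 - partialTrace E).PosSemidef := by
  refine posSemidef_of_trace (isHermitian_one.sub (partialTrace_posSemidef hE).1) fun σ hσ => ?_
  have := h σ hσ
  rw [trace_mul_one_kronecker] at this
  rw [sub_mul, one_mul, trace_sub, Complex.sub_re]
  linarith
end

lemma partialTrace_kron {a b a' b' : Type} [Fintype a] [Fintype a']
    (E : Matrix (a × b) (a × b) ℂ) (E' : Matrix (a' × b') (a' × b') ℂ) :
    partialTrace (Matrix.reindex (Equiv.prodProdProdComm a b a' b')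
      (Equiv.prodProdProdComm a b a' b') (E ⊗ₖ E')) = partialTrace E ⊗ₖ partialTrace E' := by
  ext ⟨j, j'⟩ ⟨l, l'⟩
  simp [partialTrace, Fintype.sum_prod_type, Finset.sum_mul_sum]

/-- Tensoring feasible SDP solutions: the ε = 0 additivity of the conditional
min-entropy, `m(ρ ⊗ ρ′) ≥ m(ρ)·m(ρ′)`, where
`m(ρ) = inf { Re Tr σ : σ ≥ 0, 1_a ⊗ σ - ρ ≥ 0 }`. -/
theorem stmt_16 (a b a' b' : Type)
    [Fintype a] [Fintype b] [Fintype a'] [Fintype b']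
    [DecidableEq a] [DecidableEq b] [DecidableEq a'] [DecidableEq b']
    [Nonempty a] [Nonempty b] [Nonempty a'] [Nonempty b']
    (ρ : Matrix (a × b) (a × b) ℂ) (ρ' : Matrix (a' × b') (a' × b') ℂ)
    (hρ : ρ.PosSemidef) (hρ' : ρ'.PosSemidef) :
    ∀ τ : Matrix (b × b') (b × b') ℂ, τ.PosSemidef →
      ((1 : Matrix (a × a') (a × a') ℂ) ⊗ₖ τ
        - Matrix.reindex (Equiv.prodProdProdComm a b a' b')
            (Equiv.prodProdProdComm a b a' b') (ρ ⊗ₖ ρ')).PosSemidef →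
      (τ.trace).re ≥
        sInf {s : ℝ | ∃ σ : Matrix b b ℂ, σ.PosSemidef
            ∧ ((1 : Matrix a a ℂ) ⊗ₖ σ - ρ).PosSemidef ∧ s = (σ.trace).re}
        * sInf {s : ℝ | ∃ σ' : Matrix b' b' ℂ, σ'.PosSemidef
            ∧ ((1 : Matrix a' a' ℂ) ⊗ₖ σ' - ρ').PosSemidef ∧ s = (σ'.trace).re} := by
  intro τ hτ h
  change sInf (feas ρ) * sInf (feas ρ') ≤ _
  obtain ⟨E, hE, hEle, hEρ⟩ := exists_dual hρ.1
  obtain ⟨E', hE', hEle', hEρ'⟩ := exists_dual hρ'.1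
  have hX := partialTrace_posSemidef hE
  have hX1 := one_sub_partialTrace hE hEle
  have hX1' := one_sub_partialTrace hE' hEle'
  set e := Equiv.prodProdProdComm a b a' b'
  have hF : (Matrix.reindex e e (E ⊗ₖ E')).PosSemidef := (hE.kronecker hE').submatrix _
  have hval : (Matrix.reindex e e (E ⊗ₖ E') * Matrix.reindex e e (ρ ⊗ₖ ρ')).trace
      = ((sInf (feas ρ) * sInf (feas ρ') : ℝ) : ℂ) := by
    simp only [reindex_apply]
    rw [submatrix_mul_equiv, ← mul_kronecker_mul]
    have : ∀ M : Matrix ((a × b) × (a' × b')) ((a × b) × (a' × b')) ℂ,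
        (M.submatrix e.symm e.symm).trace = M.trace := fun M =>
      Equiv.sum_comp e.symm fun i => M i i
    rw [this, trace_kronecker, hEρ, hEρ', Complex.ofReal_mul]
  have hle : (1 - partialTrace E ⊗ₖ partialTrace E').PosSemidef := by
    have : (1 : Matrix (b × b') (b × b') ℂ) - partialTrace E ⊗ₖ partialTrace E'
        = (1 - partialTrace E) ⊗ₖ (1 : Matrix b' b' ℂ) + partialTrace E ⊗ₖ (1 - partialTrace E') := by
      rw [← one_kronecker_one]
      ext ⟨i, i'⟩ ⟨j, j'⟩
      simp only [Matrix.sub_apply, Matrix.add_apply, kronecker_apply]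
      ring
    rw [this]
    exact (hX1.kronecker .one).add (hX.kronecker hX1')
  have h1 := (Complex.nonneg_iff.mp (trace_mul_nonneg hF h)).1
  have h2 := (Complex.nonneg_iff.mp (trace_mul_nonneg hle hτ)).1
  rw [mul_sub, trace_sub, hval, trace_mul_one_kronecker, partialTrace_kron, Complex.sub_re,
    Complex.ofReal_re] at h1
  rw [sub_mul, one_mul, trace_sub, Complex.sub_re] at h2
  linarith
end

section
/- Let 𝒳₀ and 𝒳₁ be finite nonempty types, let d₀, d₁ be positive natural numbers, and let σ₀ : 𝒳₀ → M_{d₀}(ℂ) and σ₁ : 𝒳₁ → M_{d₁}(ℂ) be families of positive semidefinite matrices. Define the product family σ : 𝒳₀ × 𝒳₁ → M_{d₀·d₁}(ℂ) by σ(x₀,x₁) := σ₀ x₀ ⊗ σ₁ x₁ (Kronecker product). Then P_guess(σ) = P_guess(σ₀) · P_guess(σ₁). -/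
/-!
The guessing probability is the value of a semidefinite program whose dual is to minimise `Tr Y`
subject to `σ k ≤ Y` for all `k`. Strong duality with attainment on both sides
(`exists_optimal_pair`) makes the theorem immediate: a tensor product of optimal POVMs is a POVM, a
tensor product of optimal dual matrices is dual feasible because `0 ≤ σ₀ ≤ Y₀` and `0 ≤ σ₁ ≤ Y₁`
give `σ₀ ⊗ σ₁ ≤ Y₀ ⊗ Y₁`, and both objective values multiply; a primal and a dual feasible point of
equal value are both optimal (`pguess_eq_of_pair`).

For strong duality, the POVMs form a compact set, so an optimal `M` exists. The dual optimum is
`Y = ½ ∑ j, (M j * σ j + σ j * M j)`, whose trace is the value of `M`. It is feasible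
by a first-order variation: given `v` and `k`, put `P = v v*` and replace each `M j` by
`(1 - ε P) M j (1 - ε P)`, adding the missing weight `1 - (1 - ε P)²` to outcome `k`. The value
changes by `2 ε v* (σ k - Y) v + O(ε²)`, which cannot be positive, so `v* σ k v ≤ v* Y v`.
-/

open Matrix Kronecker ComplexOrder

/-- A POVM on `ℂᵈ` indexed by a finite type `K`: a family of positive
semidefinite matrices summing to the identity. -/
def IsPOVM {K n : Type*} [Fintype K] [Fintype n] [DecidableEq n]
    (M : K → Matrix n n ℂ) : Prop :=
  (∀ k, (M k).PosSemidef) ∧ ∑ k, M k = 1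

/-- The optimal guessing probability of a (subnormalized) cq-state encoded by
the family `σ` of positive semidefinite matrices. -/
noncomputable def Pguess {K n : Type*} [Fintype K] [Fintype n] [DecidableEq n]
    (σ : K → Matrix n n ℂ) : ℝ :=
  sSup {s : ℝ | ∃ M : K → Matrix n n ℂ, IsPOVM M ∧ s = ∑ k, ((M k * σ k).trace).re}

section Compactness

open scoped MatrixOrder Matrix.Norms.L2Operator

lemma isCompact_setOf_isPOVM {K n : Type*} [Fintype K] [Fintype n] [DecidableEq n] :
    IsCompact {M : K → Matrix n n ℂ | IsPOVM M} := by
  have : ProperSpace (K → Matrix n n ℂ) := FiniteDimensional.proper ℂ _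
  refine Metric.isCompact_of_isClosed_isBounded ?_ ?_
  · have h : {M : K → Matrix n n ℂ | IsPOVM M} =
        (⋂ k, {M : K → Matrix n n ℂ | 0 ≤ M k}) ∩ {M | ∑ k, M k = 1} := by
      ext M
      simp [IsPOVM, Matrix.nonneg_iff_posSemidef]
    rw [h]
    refine IsClosed.inter (isClosed_iInter fun k => ?_) ?_
    · exact isClosed_le continuous_const (continuous_apply k)
    · exact isClosed_eq (by fun_prop) continuous_const
  · refine (Metric.isBounded_closedBall (x := 0) (r := 1)).subset fun M hM => ?_
    rw [mem_closedBall_zero_iff, pi_norm_le_iff_of_nonneg zero_le_one]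
    intro k
    have h0 : ∀ j, 0 ≤ M j := fun j => (hM.1 j).nonneg
    rw [CStarAlgebra.norm_le_one_iff_of_nonneg _ (h0 k), ← hM.2]
    exact Finset.single_le_sum (fun j _ => h0 j) (Finset.mem_univ k)

end Compactness

lemma exists_isPOVM {K n : Type*} [Fintype K] [Nonempty K] [Fintype n] [DecidableEq n] :
    ∃ M : K → Matrix n n ℂ, IsPOVM M := by
  classical
  obtain ⟨k⟩ := ‹Nonempty K›
  refine ⟨fun j => if j = k then 1 else 0, fun j => ?_, by simp⟩
  dsimp only
  split_ifs
  · exact PosSemidef.one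
  · exact PosSemidef.zero

lemma exists_optimal_isPOVM {K n : Type*} [Fintype K] [Nonempty K] [Fintype n] [DecidableEq n]
    (σ : K → Matrix n n ℂ) :
    ∃ M : K → Matrix n n ℂ, IsPOVM M ∧ ∀ N : K → Matrix n n ℂ, IsPOVM N →
      ∑ k, ((N k * σ k).trace).re ≤ ∑ k, ((M k * σ k).trace).re := by
  have hc : Continuous fun M : K → Matrix n n ℂ => ∑ k, ((M k * σ k).trace).re := by
    refine continuous_finsetSum _ fun k _ => Complex.continuous_re.comp ?_
    exact ((continuous_apply k).matrix_mul continuous_const).matrix_trace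
  obtain ⟨M, hM, hmax⟩ :=
    (isCompact_setOf_isPOVM (K := K) (n := n)).exists_isMaxOn exists_isPOVM hc.continuousOn
  exact ⟨M, hM, fun N hN => hmax hN⟩

/-- The perturbed POVM of the first-order variation; `P` is a nonnegative multiple of a projection,
so `1 - (1 - ε P)² = (2 ε - ε² c) P`. -/
lemma isPOVM_perturb {K n : Type*} [Fintype K] [DecidableEq K] [Fintype n] [DecidableEq n]
    {M : K → Matrix n n ℂ} (hM : IsPOVM M) (k : K) {P : Matrix n n ℂ} (hP : P.PosSemidef) {c : ℝ}
    (hPc : P * P = c • P) {ε : ℝ} (hε : 0 ≤ ε) (hεc : ε * c ≤ 2) :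
    IsPOVM fun j => (1 - ε • P) * M j * (1 - ε • P) +
      if j = k then (2 * ε - ε ^ 2 * c) • P else 0 := by
  refine ⟨fun j => ?_, ?_⟩
  · have hH : (1 - ε • P)ᴴ = 1 - ε • P := by
      simp [conjTranspose_sub, conjTranspose_smul, hP.isHermitian.eq]
    refine PosSemidef.add ?_ ?_
    · have := (hM.1 j).mul_mul_conjTranspose_same (1 - ε • P)
      rwa [hH] at this
    · split_ifs
      · exact hP.smul (by nlinarith)
      · exact PosSemidef.zero
  · rw [Finset.sum_add_distrib, ← Finset.sum_mul, ← Finset.mul_sum, hM.2]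
    simp only [Finset.sum_ite_eq', Finset.mem_univ, if_true, mul_one, sub_mul, mul_sub, one_mul,
      smul_mul_assoc, mul_smul_comm, hPc]
    module

/-- Strong duality, with both optima attained. -/
lemma exists_optimal_pair {K n : Type*} [Fintype K] [Nonempty K] [Fintype n] [DecidableEq n]
    (σ : K → Matrix n n ℂ) (hσ : ∀ k, (σ k).IsHermitian) :
    ∃ (M : K → Matrix n n ℂ) (Y : Matrix n n ℂ), IsPOVM M ∧ (∀ k, (Y - σ k).PosSemidef) ∧
      ∑ k, ((M k * σ k).trace).re = Y.trace.re := by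
  classical
  obtain ⟨M, hM, hmax⟩ := exists_optimal_isPOVM σ
  have hMH : ∀ j, (M j)ᴴ = M j := fun j => (hM.1 j).isHermitian.eq
  set Y : Matrix n n ℂ := (1 / 2 : ℝ) • ∑ j, (M j * σ j + σ j * M j) with hY
  have hYH : Y.IsHermitian := by
    rw [IsHermitian, hY, conjTranspose_smul, conjTranspose_sum]
    simp [conjTranspose_add, conjTranspose_mul, hMH, (hσ _).eq, add_comm]
  refine ⟨M, Y, hM, fun k => ?_, ?_⟩
  · have hDH : (Y - σ k).IsHermitian := hYH.sub (hσ k)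
    refine PosSemidef.of_dotProduct_mulVec_nonneg hDH fun v => ?_
    set P : Matrix n n ℂ := vecMulVec v (star v) with hPdef
    have hP : P.PosSemidef := posSemidef_vecMulVec_self_star v
    obtain ⟨c, hc0, hc⟩ : ∃ c : ℝ, 0 ≤ c ∧ star v ⬝ᵥ v = (c : ℂ) := by
      have h := dotProduct_star_self_nonneg v
      obtain ⟨h1, h2⟩ := Complex.le_def.1 h
      exact ⟨_, h1, Complex.ext rfl (by simpa using h2.symm)⟩
    have hPc : P * P = c • P := by
      rw [hPdef, vecMulVec_mul_vecMulVec, hc]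
      ext i j
      simp [vecMulVec_apply]
      ring
    have htr : ∀ A : Matrix n n ℂ, star v ⬝ᵥ (A *ᵥ v) = (P * A).trace := by
      intro A
      rw [trace_mul_comm, hPdef, mul_vecMulVec, trace_vecMulVec, dotProduct_comm]
    have him : (star v ⬝ᵥ ((Y - σ k) *ᵥ v)).im = 0 := by
      simpa using hDH.im_star_dotProduct_mulVec_self v
    suffices hre : 0 ≤ (star v ⬝ᵥ ((Y - σ k) *ᵥ v)).re by
      exact Complex.le_def.2 ⟨by simpa using hre, by simpa using him.symm⟩
    set a : ℝ := (star v ⬝ᵥ ((Y - σ k) *ᵥ v)).re with ha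
    set b : ℝ := ∑ j, ((P * M j * P * σ j).trace).re - c * ((P * σ k).trace).re with hb
    have hYtr : 2 * ((P * Y).trace).re =
        ∑ j, (((P * M j * σ j).trace).re + ((M j * P * σ j).trace).re) := by
      rw [hY, mul_smul_comm, trace_smul, Finset.mul_sum, trace_sum, Complex.real_smul,
        Complex.re_ofReal_mul, Complex.re_sum, ← mul_assoc]
      norm_num
      refine Finset.sum_congr rfl fun j _ => ?_
      rw [mul_add, trace_add, Complex.add_re, ← mul_assoc, ← mul_assoc,
        trace_mul_cycle P (σ j) (M j)]
    have key : ∀ ε : ℝ, 0 < ε → ε * c ≤ 2 → ε * b ≤ 2 * a := by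
      intro ε hε hεc
      have h := hmax _ (isPOVM_perturb hM k hP hPc hε.le hεc)
      have hval : ∑ j, ((((1 - ε • P) * M j * (1 - ε • P) +
          if j = k then (2 * ε - ε ^ 2 * c) • P else 0) * σ j).trace).re =
          ∑ j, ((M j * σ j).trace).re - ε * (2 * ((P * Y).trace).re) +
          ε ^ 2 * ∑ j, ((P * M j * P * σ j).trace).re +
          (2 * ε - ε ^ 2 * c) * ((P * σ k).trace).re := by
        have hlast : (2 * ε - ε ^ 2 * c) * ((P * σ k).trace).re =
            ∑ j, if j = k then (2 * ε - ε ^ 2 * c) * ((P * σ j).trace).re else 0 := by simp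
        rw [hYtr, hlast, Finset.mul_sum, Finset.mul_sum, ← Finset.sum_sub_distrib,
          ← Finset.sum_add_distrib, ← Finset.sum_add_distrib]
        refine Finset.sum_congr rfl fun j _ => ?_
        have hexp : (1 - ε • P) * M j * (1 - ε • P) * σ j =
            M j * σ j - ε • (P * M j * σ j) - ε • (M j * P * σ j)
              + (ε ^ 2) • (P * M j * P * σ j) := by
          simp only [mul_one, sub_mul, mul_sub, one_mul, smul_mul_assoc, mul_smul_comm]
          module
        rw [add_mul, hexp]
        split_ifs
        · simp only [trace_add, trace_sub, trace_smul, smul_mul_assoc, Complex.add_re,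
            Complex.sub_re, Complex.real_smul, Complex.re_ofReal_mul]
          ring
        · simp only [trace_add, trace_sub, trace_smul, zero_mul, trace_zero, Complex.add_re,
            Complex.sub_re, Complex.real_smul, Complex.re_ofReal_mul, Complex.zero_re]
          ring
      rw [hval] at h
      have ha' : a = ((P * Y).trace).re - ((P * σ k).trace).re := by
        rw [ha, htr, mul_sub, trace_sub, Complex.sub_re]
      rw [ha', hb]
      refine le_of_mul_le_mul_left ?_ hε
      nlinarith
    -- letting `ε → 0` removes the second-order term `b`
    have hlim : Filter.Tendsto (fun ε : ℝ => ε * b) (nhdsWithin 0 (Set.Ioi 0)) (nhds 0) := by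
      have : Filter.Tendsto (fun ε : ℝ => ε * b) (nhds 0) (nhds (0 * b)) :=
        (continuous_id.mul continuous_const).tendsto 0
      rw [zero_mul] at this
      exact this.mono_left nhdsWithin_le_nhds
    have hsmall : ∀ᶠ ε : ℝ in nhdsWithin 0 (Set.Ioi 0), ε * c ≤ 2 := by
      refine Filter.Eventually.filter_mono nhdsWithin_le_nhds ?_
      have : Filter.Tendsto (fun ε : ℝ => ε * c) (nhds 0) (nhds (0 * c)) :=
        (continuous_id.mul continuous_const).tendsto 0
      exact this.eventually_le_const (by simp)
    have h2a : 0 ≤ 2 * a := by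
      refine le_of_tendsto hlim ?_
      filter_upwards [hsmall, self_mem_nhdsWithin] with ε h1 h2 using key ε h2 h1
    linarith
  · rw [hY, trace_smul, trace_sum, Complex.real_smul, Complex.re_ofReal_mul, Complex.re_sum,
      Finset.mul_sum]
    refine Finset.sum_congr rfl fun j _ => ?_
    rw [trace_add, trace_mul_comm (σ j), Complex.add_re]
    ring

lemma re_trace_mul_nonneg {n : Type*} [Fintype n] [DecidableEq n] {A B : Matrix n n ℂ}
    (hA : A.PosSemidef) (hB : B.PosSemidef) : 0 ≤ ((A * B).trace).re := by
  open scoped MatrixOrder in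
  obtain ⟨C, rfl⟩ := CStarAlgebra.nonneg_iff_eq_star_mul_self.mp hB.nonneg
  rw [star_eq_conjTranspose, ← mul_assoc, trace_mul_comm, ← mul_assoc]
  exact (Complex.le_def.1 (hA.mul_mul_conjTranspose_same C).trace_nonneg).1

/-- Weak duality: feasible primal and dual points of equal value certify the optimum. -/
lemma pguess_eq_of_pair {K n : Type*} [Fintype K] [Fintype n] [DecidableEq n]
    {σ M : K → Matrix n n ℂ} {Y : Matrix n n ℂ} (hM : IsPOVM M)
    (hY : ∀ k, (Y - σ k).PosSemidef) (h : ∑ k, ((M k * σ k).trace).re = Y.trace.re) :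
    Pguess σ = Y.trace.re := by
  refine IsGreatest.csSup_eq ⟨⟨M, hM, h.symm⟩, ?_⟩
  rintro s ⟨N, hN, rfl⟩
  calc ∑ k, ((N k * σ k).trace).re ≤ ∑ k, ((N k * Y).trace).re := by
        refine Finset.sum_le_sum fun k _ => ?_
        have := re_trace_mul_nonneg (hN.1 k) (hY k)
        rw [mul_sub, trace_sub, Complex.sub_re] at this
        linarith
    _ = Y.trace.re := by
        rw [← Complex.re_sum, ← trace_sum, ← Finset.sum_mul, hN.2, one_mul]

lemma re_trace_kronecker {m n : Type*} [Fintype m] [Fintype n]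
    {A : Matrix m m ℂ} (B : Matrix n n ℂ) (hA : A.PosSemidef) :
    ((A ⊗ₖ B).trace).re = A.trace.re * B.trace.re := by
  have h := (Complex.le_def.1 hA.trace_nonneg).2
  rw [trace_kronecker, Complex.mul_re, ← h]
  simp

lemma re_trace_mul_mul {m n : Type*} [Fintype m] [Fintype n]
    {A B : Matrix m m ℂ} {C D : Matrix n n ℂ} (hA : A.IsHermitian) (hB : B.IsHermitian) :
    (((A ⊗ₖ C) * (B ⊗ₖ D)).trace).re = ((A * B).trace).re * ((C * D).trace).re := by
  have h : ((A * B).trace).im = 0 := by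
    have : star ((A * B).trace) = (A * B).trace := by
      rw [← trace_conjTranspose, conjTranspose_mul, hA.eq, hB.eq, trace_mul_comm]
    exact Complex.conj_eq_iff_im.1 this
  rw [← mul_kronecker_mul, trace_kronecker, Complex.mul_re, h]
  simp

lemma trace_reindex_self {m n : Type*} [Fintype m] [Fintype n] (e : m ≃ n) (A : Matrix m m ℂ) :
    (reindex e e A).trace = A.trace := by
  simp only [trace, diag, reindex_apply, submatrix_apply]
  exact e.symm.sum_comp fun i => A i i

/-- Multiplicativity of the guessing probability for independent cq-states:
`P_guess(σ) = P_guess(σ₀)·P_guess(σ₁)` where `σ(x₀,x₁) = σ₀ x₀ ⊗ σ₁ x₁`. -/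
theorem stmt_17 (𝒳₀ 𝒳₁ : Type) [Fintype 𝒳₀] [Fintype 𝒳₁] [Nonempty 𝒳₀] [Nonempty 𝒳₁]
    (d₀ d₁ : ℕ) (hd₀ : 0 < d₀) (hd₁ : 0 < d₁)
    (σ₀ : 𝒳₀ → Matrix (Fin d₀) (Fin d₀) ℂ) (σ₁ : 𝒳₁ → Matrix (Fin d₁) (Fin d₁) ℂ)
    (hσ₀ : ∀ x, (σ₀ x).PosSemidef) (hσ₁ : ∀ x, (σ₁ x).PosSemidef) :
    Pguess (fun p : 𝒳₀ × 𝒳₁ =>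
        (Matrix.reindex finProdFinEquiv finProdFinEquiv (σ₀ p.1 ⊗ₖ σ₁ p.2) :
          Matrix (Fin (d₀ * d₁)) (Fin (d₀ * d₁)) ℂ))
      = Pguess σ₀ * Pguess σ₁ := by
  obtain ⟨M₀, Y₀, hM₀, hY₀, h₀⟩ := exists_optimal_pair σ₀ fun x => (hσ₀ x).isHermitian
  obtain ⟨M₁, Y₁, hM₁, hY₁, h₁⟩ := exists_optimal_pair σ₁ fun x => (hσ₁ x).isHermitian
  have hY₀pos : Y₀.PosSemidef := by
    obtain ⟨x⟩ := ‹Nonempty 𝒳₀›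
    simpa using (hY₀ x).add (hσ₀ x)
  have hM : IsPOVM fun p : 𝒳₀ × 𝒳₁ =>
      (reindex finProdFinEquiv finProdFinEquiv (M₀ p.1 ⊗ₖ M₁ p.2) :
        Matrix (Fin (d₀ * d₁)) (Fin (d₀ * d₁)) ℂ) := by
    refine ⟨fun p => ((hM₀.1 p.1).kronecker (hM₁.1 p.2)).submatrix _, ?_⟩
    have hsum : ∑ p : 𝒳₀ × 𝒳₁, M₀ p.1 ⊗ₖ M₁ p.2 = 1 := by
      rw [← one_kronecker_one, ← hM₀.2, ← hM₁.2]
      ext i j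
      simp [Matrix.sum_apply, kroneckerMap_apply, Fintype.sum_prod_type, Finset.sum_mul_sum]
    have hlin := map_sum (reindexLinearEquiv ℂ ℂ (finProdFinEquiv (m := d₀) (n := d₁))
      finProdFinEquiv) (fun p : 𝒳₀ × 𝒳₁ => M₀ p.1 ⊗ₖ M₁ p.2) Finset.univ
    rw [hsum] at hlin
    simp only [coe_reindexLinearEquiv] at hlin
    rw [← hlin]
    simp
  have hY : ∀ p : 𝒳₀ × 𝒳₁, (reindex finProdFinEquiv finProdFinEquiv (Y₀ ⊗ₖ Y₁) -
      (reindex finProdFinEquiv finProdFinEquiv (σ₀ p.1 ⊗ₖ σ₁ p.2) :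
        Matrix (Fin (d₀ * d₁)) (Fin (d₀ * d₁)) ℂ)).PosSemidef := by
    intro p
    have h := ((hY₀pos.kronecker (hY₁ p.2)).add
      ((hY₀ p.1).kronecker (hσ₁ p.2))).submatrix finProdFinEquiv.symm
    have heq : reindex finProdFinEquiv finProdFinEquiv (Y₀ ⊗ₖ Y₁) -
        reindex finProdFinEquiv finProdFinEquiv (σ₀ p.1 ⊗ₖ σ₁ p.2) =
        (Y₀ ⊗ₖ (Y₁ - σ₁ p.2) + (Y₀ - σ₀ p.1) ⊗ₖ σ₁ p.2).submatrix
          finProdFinEquiv.symm finProdFinEquiv.symm := by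
      ext i j
      simp [kroneckerMap_apply]
      ring
    rw [heq]
    exact h
  rw [pguess_eq_of_pair hM hY, pguess_eq_of_pair hM₀ hY₀ h₀, pguess_eq_of_pair hM₁ hY₁ h₁,
    trace_reindex_self, re_trace_kronecker _ hY₀pos]
  rw [trace_reindex_self, re_trace_kronecker _ hY₀pos, ← h₀, ← h₁, Finset.sum_mul_sum,
    Fintype.sum_prod_type]
  refine Finset.sum_congr rfl fun x _ => Finset.sum_congr rfl fun y _ => ?_
  rw [← re_trace_mul_mul (hM₀.1 x).isHermitian (hσ₀ x).isHermitian,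
    ← trace_reindex_self finProdFinEquiv]
  simp only [reindex_apply, submatrix_mul_equiv]
end
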